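/- Let R be a commutative Noetherian ring, M a finitely generated R-module, and 𝔡 ⊆ M the largest submodule of finite length. If U ⊆ M is a submodule such that the quotient M/U has ℓ_𝔭(M/U) injecting into H¹_𝔭(U) for all primes (i.e., U is open: ℓ_𝔭(U) = ℓ_𝔭(M) for all 𝔭), then 𝔡 ⊆ U. In particular, every open submodule contains the maximal finite-length submodule of M. -/

import Mathlib

/-- The `𝔭`-torsion submodule `H⁰_𝔭(M)` of the localization `M_𝔭`: the elements of
`LocalizedModule 𝔭.primeCompl M` annihilated by some power of `𝔭 R_𝔭`. -/
noncomputable def pTorsion {R : Type*} [CommRing R] (p : Ideal R) [p.IsPrime]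
    (M : Type*) [AddCommGroup M] [Module R M] :
    Submodule (Localization.AtPrime p) (LocalizedModule p.primeCompl M) :=
  ⨆ n : ℕ,
    Submodule.torsionBySet (Localization.AtPrime p) (LocalizedModule p.primeCompl M)
      ((Ideal.map (algebraMap R (Localization.AtPrime p)) p ^ n :
        Ideal (Localization.AtPrime p)) : Set (Localization.AtPrime p))

/-- The length of a module: the Krull dimension of its lattice of submodules
(`⊥` never occurs; the value is `⊤` when there are chains of unbounded length). -/
noncomputable def modLength (A : Type*) (M : Type*) [Ring A] [AddCommGroup M] [Module A M] :
    WithBot ℕ∞ :=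
  Order.krullDim (Submodule A M)

/-- The local multiplicity `ℓ_𝔭(M)`: the length over `R_𝔭` of the `𝔭`-torsion submodule
of the localization `M_𝔭`. -/
noncomputable def lmult {R : Type*} [CommRing R] (p : PrimeSpectrum R)
    (M : Type*) [AddCommGroup M] [Module R M] : WithBot ℕ∞ :=
  modLength (Localization.AtPrime p.asIdeal) (pTorsion p.asIdeal M)

/-!
At a maximal ideal `𝔪`, Nakayama's lemma over `R_𝔪` shows that a power of `𝔪` kills the localization
of a finite-length submodule `D`, so `D_𝔪 ⊆ H⁰_𝔪(M)`. On the other hand `H⁰_𝔪(U)` embeds into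
`H⁰_𝔪(M)`; when both have the same finite length the embedding is onto, whence `H⁰_𝔪(M) ⊆ U_𝔪`.
Thus `D_𝔪 ⊆ U_𝔪` at every maximal ideal, and inclusion of submodules is a local property.
-/

section IsLocalizedModule

variable {R A M N : Type*} [CommRing R] [CommRing A] [Algebra R A] [AddCommGroup M] [Module R M]
  [AddCommGroup N] [Module R N] [Module A N] [IsScalarTower R A N]

lemma isNoetherian_of_isLocalizedModule [IsNoetherian R M] (S : Submonoid R) [IsLocalization S A]
    (f : M →ₗ[R] N) [IsLocalizedModule S f] : IsNoetherian A N :=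
  isNoetherian_iff'.mpr (Submodule.localized'gi A S f).strictMono_u.wellFoundedGT

lemma isArtinian_of_isLocalizedModule [IsArtinian R M] (S : Submonoid R) [IsLocalization S A]
    (f : M →ₗ[R] N) [IsLocalizedModule S f] : IsArtinian A N :=
  (Submodule.localized'gi A S f).strictMono_u.wellFoundedLT

lemma range_localizedModuleMap (S : Submonoid R) {P : Type*} [AddCommGroup P] [Module R P]
    (g : M →ₗ[R] P) :
    LinearMap.range (LocalizedModule.map S g) = (LinearMap.range g).localized S :=
  (LinearMap.localized'_range_eq_range_localizedMap _ S (LocalizedModule.mkLinearMap S M)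
    (LocalizedModule.mkLinearMap S P) g).symm

end IsLocalizedModule

lemma surjective_of_injective_of_length_le {A N N' : Type*} [Ring A] [AddCommGroup N] [Module A N]
    [AddCommGroup N'] [Module A N'] {f : N' →ₗ[A] N} (hf : Function.Injective f)
    (hfin : Module.length A N ≠ ⊤) (hle : Module.length A N ≤ Module.length A N') :
    Function.Surjective f := by
  obtain ⟨_, _⟩ := isFiniteLength_iff_isNoetherian_isArtinian.mp (Module.length_ne_top_iff.mp hfin)
  rw [← LinearMap.range_eq_top]
  by_contra hne
  refine (Submodule.length_lt hne).not_ge ?_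
  rwa [← (LinearEquiv.ofInjective f hf).length_eq]

section PrimaryComponent

variable {A : Type*} [CommRing A] (I : Ideal A)

lemma isArtinian_of_pow_smul_top_eq_bot [IsArtinianRing (A ⧸ I)] (n : ℕ) (N : Type*)
    [AddCommGroup N] [Module A N] [IsNoetherian A N] (h : (I ^ n • ⊤ : Submodule A N) = ⊥) :
    IsArtinian A N := by
  induction n generalizing N with
  | zero =>
    have htop : (⊤ : Submodule A N) = ⊥ := by simpa using h
    have : Subsingleton N :=
      (Submodule.subsingleton_iff A).mp (subsingleton_of_bot_eq_top htop.symm)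
    exact isArtinian_of_finite
  | succ n ih =>
    have hsub : IsArtinian A (I • ⊤ : Submodule A N) := by
      refine ih _ (Submodule.map_injective_of_injective (Submodule.subtype_injective _) ?_)
      rw [Submodule.map_smul'', Submodule.map_subtype_top, ← Submodule.mul_smul, ← pow_succ, h,
        Submodule.map_bot]
    have : Module.Finite (A ⧸ I) (N ⧸ (I • ⊤ : Submodule A N)) :=
      Module.Finite.of_restrictScalars_finite A _ _
    have hquot : IsArtinian A (N ⧸ (I • ⊤ : Submodule A N)) :=
      isArtinian_of_surjective_algebraMap (R := A ⧸ I) Ideal.Quotient.mk_surjective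
    exact (isArtinian_iff_submodule_quotient (I • ⊤)).mpr ⟨hsub, hquot⟩

variable (N : Type*) [AddCommGroup N] [Module A N]

lemma exists_primaryComponent_eq_torsionBySet_pow [IsNoetherian A N] :
    ∃ n : ℕ, Ideal.primaryComponent N I =
      Submodule.torsionBySet A N ((I ^ n : Ideal A) : Set A) := by
  let T : ℕ →o Submodule A N :=
    ⟨fun n ↦ Submodule.torsionBySet A N ((I ^ n : Ideal A) : Set A), fun _ _ h ↦
      Submodule.torsionBySet_le_torsionBySet_of_subset (Ideal.pow_le_pow_right h)⟩
  exact ⟨monotonicSequenceLimitIndex T, WellFoundedGT.iSup_eq_monotonicSequenceLimit T⟩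

lemma length_primaryComponent_ne_top [IsArtinianRing (A ⧸ I)] [IsNoetherian A N] :
    Module.length A (Ideal.primaryComponent N I) ≠ ⊤ := by
  obtain ⟨n, hn⟩ := exists_primaryComponent_eq_torsionBySet_pow I N
  have hpow : (I ^ n • ⊤ : Submodule A (Ideal.primaryComponent N I)) = ⊥ := by
    rw [hn, ← Submodule.le_annihilator_iff, Submodule.annihilator_top]
    exact (Module.isTorsionBySet_iff_subset_annihilator _ _).mp
      (Submodule.torsionBySet_isTorsionBySet _)
  have := isArtinian_of_pow_smul_top_eq_bot I n _ hpow
  exact Module.length_ne_top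

variable {I}

lemma exists_pow_smul_top_eq_bot [IsNoetherian A N] [IsArtinian A N]
    (hI : I ≤ Ideal.jacobson ⊥) : ∃ n : ℕ, (I ^ n • ⊤ : Submodule A N) = ⊥ := by
  obtain ⟨n, hn⟩ := IsArtinian.monotone_stabilizes
    ⟨fun n ↦ OrderDual.toDual (I ^ n • ⊤ : Submodule A N),
      fun _ _ h ↦ Submodule.smul_mono_left (Ideal.pow_le_pow_right h)⟩
  have hstable : (I ^ n • ⊤ : Submodule A N) = I • I ^ n • ⊤ := by
    rw [← Submodule.mul_smul, ← pow_succ']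
    exact hn (n + 1) n.le_succ
  exact ⟨n, Submodule.eq_bot_of_le_smul_of_le_jacobson_bot I _ (IsNoetherian.noetherian _)
    hstable.le hI⟩

lemma primaryComponent_eq_top_of_le_jacobson_bot [IsNoetherian A N] [IsArtinian A N]
    (hI : I ≤ Ideal.jacobson ⊥) : Ideal.primaryComponent N I = ⊤ := by
  obtain ⟨n, hn⟩ := exists_pow_smul_top_eq_bot N hI
  refine eq_top_iff.mpr fun x _ ↦ (Ideal.primaryComponent_mem N I x).mpr ⟨n, ?_⟩
  refine (Submodule.mem_torsionBySet_iff _ _).mpr fun a ↦ ?_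
  rw [← Submodule.mem_bot A, ← hn]
  exact Submodule.smul_mem_smul a.2 Submodule.mem_top

variable {N} {N' : Type*} [AddCommGroup N'] [Module A N']

lemma range_le_primaryComponent_of_eq_top (f : N' →ₗ[A] N)
    (h : Ideal.primaryComponent N' I = ⊤) :
    LinearMap.range f ≤ Ideal.primaryComponent N I := by
  rintro _ ⟨x, rfl⟩
  exact Ideal.primaryComponent_map_mem I f ⟨x, h ▸ Submodule.mem_top⟩

lemma primaryComponent_le_range_of_length_le {f : N' →ₗ[A] N} (hf : Function.Injective f)
    (hfin : Module.length A (Ideal.primaryComponent N I) ≠ ⊤)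
    (hle : Module.length A (Ideal.primaryComponent N I) ≤
      Module.length A (Ideal.primaryComponent N' I)) :
    Ideal.primaryComponent N I ≤ LinearMap.range f := by
  have hinj : Function.Injective (Ideal.primaryComponent.map I f) := fun x y hxy ↦
    Subtype.ext (hf (congrArg Subtype.val hxy))
  intro y hy
  obtain ⟨x, hx⟩ := surjective_of_injective_of_length_le hinj hfin hle ⟨y, hy⟩
  exact ⟨x, congrArg Subtype.val hx⟩

end PrimaryComponent

section LocalMultiplicity

variable {R : Type*} [CommRing R] {M : Type*} [AddCommGroup M] [Module R M]

lemma pTorsion_eq_primaryComponent (p : Ideal R) [p.IsPrime] :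
    pTorsion p M = Ideal.primaryComponent (LocalizedModule p.primeCompl M)
      (IsLocalRing.maximalIdeal (Localization.AtPrime p)) := by
  rw [← Localization.AtPrime.map_eq_maximalIdeal]
  rfl

variable (M) in
lemma lmult_eq_length (p : PrimeSpectrum R) :
    lmult p M = Module.length (Localization.AtPrime p.asIdeal) (pTorsion p.asIdeal M) :=
  (Module.coe_length _ _).symm

variable (M) in
lemma lmult_ne_top [IsNoetherian R M] (p : PrimeSpectrum R) : lmult p M ≠ ⊤ := by
  let A := Localization.AtPrime p.asIdeal
  have : IsNoetherian A (LocalizedModule p.asIdeal.primeCompl M) :=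
    isNoetherian_of_isLocalizedModule p.asIdeal.primeCompl
      (LocalizedModule.mkLinearMap p.asIdeal.primeCompl M)
  have : IsArtinianRing (A ⧸ IsLocalRing.maximalIdeal A) :=
    inferInstanceAs (IsArtinianRing (IsLocalRing.ResidueField A))
  rw [lmult_eq_length, pTorsion_eq_primaryComponent, ne_eq, WithBot.coe_eq_top]
  exact length_primaryComponent_ne_top _ _

lemma localized_le_pTorsion {D : Submodule R M} (hD : IsFiniteLength R D) (p : Ideal R)
    [p.IsPrime] : D.localized p.primeCompl ≤ pTorsion p M := by
  obtain ⟨_, _⟩ := isFiniteLength_iff_isNoetherian_isArtinian.mp hD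
  let A := Localization.AtPrime p
  let ι := LocalizedModule.mkLinearMap p.primeCompl D
  have : IsNoetherian A (LocalizedModule p.primeCompl D) :=
    isNoetherian_of_isLocalizedModule p.primeCompl ι
  have : IsArtinian A (LocalizedModule p.primeCompl D) :=
    isArtinian_of_isLocalizedModule p.primeCompl ι
  rw [pTorsion_eq_primaryComponent, ← D.range_subtype, ← range_localizedModuleMap]
  exact range_le_primaryComponent_of_eq_top _
    (primaryComponent_eq_top_of_le_jacobson_bot _ (IsLocalRing.maximalIdeal_le_jacobson ⊥))

lemma pTorsion_le_localized {U : Submodule R M} (p : PrimeSpectrum R) (hfin : lmult p M ≠ ⊤)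
    (hle : lmult p M ≤ lmult p U) :
    pTorsion p.asIdeal M ≤ U.localized p.asIdeal.primeCompl := by
  rw [lmult_eq_length, pTorsion_eq_primaryComponent, ne_eq, WithBot.coe_eq_top] at hfin
  rw [lmult_eq_length, lmult_eq_length, pTorsion_eq_primaryComponent,
    pTorsion_eq_primaryComponent, WithBot.coe_le_coe] at hle
  rw [pTorsion_eq_primaryComponent, ← U.range_subtype, ← range_localizedModuleMap]
  exact primaryComponent_le_range_of_length_le
    (LocalizedModule.map_injective _ U.subtype U.subtype_injective) hfin hle

end LocalMultiplicity

theorem finiteLength_le_open_general {R : Type*} [CommRing R] {M : Type*} [AddCommGroup M]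
    [Module R M] {D U : Submodule R M} (hD : IsFiniteLength R D)
    (hfin : ∀ m : MaximalSpectrum R, lmult m.toPrimeSpectrum M ≠ ⊤)
    (hle : ∀ m : MaximalSpectrum R, lmult m.toPrimeSpectrum M ≤ lmult m.toPrimeSpectrum U) :
    D ≤ U := by
  refine Submodule.le_of_localization_maximal (fun P _ ↦ LocalizedModule P.primeCompl M)
    (fun P _ ↦ LocalizedModule.mkLinearMap P.primeCompl M) fun P hP ↦ ?_
  let m : MaximalSpectrum R := ⟨P, hP⟩
  exact (localized_le_pTorsion hD P).trans
    (pTorsion_le_localized m.toPrimeSpectrum (hfin m) (hle m))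

/-- Every open submodule `U ⊆ M` (one with `ℓ_𝔭(U) = ℓ_𝔭(M)` for all primes `𝔭`) contains
the largest finite-length submodule of `M`. -/
theorem finiteLength_le_open {R : Type*} [CommRing R] [IsNoetherianRing R]
    {M : Type*} [AddCommGroup M] [Module R M] [Module.Finite R M]
    (D : Submodule R M) (hD : IsFiniteLength R D)
    (hDmax : ∀ D' : Submodule R M, IsFiniteLength R D' → D' ≤ D)
    (U : Submodule R M) (hU : ∀ p : PrimeSpectrum R, lmult p U = lmult p M) :
    D ≤ U :=
  finiteLength_le_open_general hD (fun _ ↦ lmult_ne_top M _) fun m ↦ (hU m.toPrimeSpectrum).ge
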